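/- arXiv:1605.02541 — 5 statements merged into one kernel-verified Lean document; each statement's English description precedes it below -/
import Mathlib

section
/- Let T be a real-valued random variable and define J(m) = E(|m - T| / |T|), with the conventions a/0 = +∞ for a ≠ 0 and 0/0 = 1. Then J(m) < ∞ for all real m if and only if (1) P(T = 0) = 0, and (2) both series Σ_{k≥1} k·P(T ∈ (1/(k+1), 1/k]) and Σ_{k≥1} k·P(T ∈ [-1/k, -1/(k+1))) converge. Moreover, if any of these conditions fails, then J(m) = +∞ for all m ≠ 0. -/
open MeasureTheory ENNReal Filter Set

/-- The MAPE pointwise ratio `|m - t| / |t|` with the conventions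
`a/0 = ∞` for `a ≠ 0` and `0/0 = 1`, valued in `[0, ∞]`. -/
noncomputable def mapeRatio (m t : ℝ) : ℝ≥0∞ :=
  if t = 0 then (if m = 0 then 1 else ⊤) else ENNReal.ofReal (|m - t| / |t|)

lemma mape_aux_pt (t : ℝ) (k : ℕ) :
    (Set.Ioc (1 / ((k : ℝ) + 1)) (1 / (k : ℝ))).indicator (fun _ => (k : ℝ≥0∞)) t
      = if k = ⌊1 / t⌋₊ then (k : ℝ≥0∞) else 0 := by
  rcases Nat.eq_zero_or_pos k with rfl | hk
  · simp
  have hk' : (0 : ℝ) < k := by exact_mod_cast hk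
  rw [Set.indicator_apply]
  congr 1
  rw [eq_iff_iff, eq_comm, Nat.floor_eq_iff' hk.ne', Set.mem_Ioc]
  constructor
  · rintro ⟨h1, h2⟩
    have ht : 0 < t := lt_trans (by positivity) h1
    rw [div_lt_iff₀ (by positivity)] at h1
    rw [le_div_iff₀ hk'] at h2
    rw [le_div_iff₀ ht, div_lt_iff₀ ht]
    constructor <;> linarith
  · rintro ⟨h1, h2⟩
    have ht : 0 < t := one_div_pos.mp (lt_of_lt_of_le hk' h1)
    rw [le_div_iff₀ ht] at h1
    rw [div_lt_iff₀ ht] at h2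
    rw [div_lt_iff₀ (by positivity), le_div_iff₀ hk']
    constructor <;> linarith

lemma mape_aux_sum {Ω : Type*} [MeasurableSpace Ω] (μ : Measure Ω)
    [IsProbabilityMeasure μ] (T : Ω → ℝ) (hT : Measurable T) :
    Summable (fun k : ℕ =>
         (k : ℝ) * (μ {ω | T ω ∈ Set.Ioc (1 / ((k : ℝ) + 1)) (1 / (k : ℝ))}).toReal) ↔
    ∫⁻ ω, (⌊1 / T ω⌋₊ : ℝ≥0∞) ∂μ ≠ ⊤ := by
  have key : ∫⁻ ω, (⌊1 / T ω⌋₊ : ℝ≥0∞) ∂μ =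
      ∑' k : ℕ, (k : ℝ≥0∞) * μ {ω | T ω ∈ Set.Ioc (1 / ((k : ℝ) + 1)) (1 / (k : ℝ))} := by
    have h1 : ∀ ω, (⌊1 / T ω⌋₊ : ℝ≥0∞) = ∑' k : ℕ,
        (Set.Ioc (1 / ((k : ℝ) + 1)) (1 / (k : ℝ))).indicator (fun _ => (k : ℝ≥0∞)) (T ω) := by
      intro ω
      simp_rw [mape_aux_pt]
      exact (tsum_ite_eq _ (fun k : ℕ => (k : ℝ≥0∞))).symm
    simp_rw [h1]
    rw [lintegral_tsum]
    · congr 1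
      ext k
      have hm : MeasurableSet {ω | T ω ∈ Set.Ioc (1 / ((k : ℝ) + 1)) (1 / (k : ℝ))} :=
        hT measurableSet_Ioc
      rw [← lintegral_indicator_const hm]
      rfl
    · intro k
      exact ((measurable_const.indicator measurableSet_Ioc).comp hT).aemeasurable
  rw [key]
  have hc : ∀ k : ℕ, (k : ℝ) * (μ {ω | T ω ∈ Set.Ioc (1 / ((k : ℝ) + 1)) (1 / (k : ℝ))}).toReal
      = ((k : ℝ≥0∞) * μ {ω | T ω ∈ Set.Ioc (1 / ((k : ℝ) + 1)) (1 / (k : ℝ))}).toReal := by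
    intro k
    simp
  simp_rw [hc]
  constructor
  · intro h
    have h2 := h.tsum_ofReal_ne_top
    convert h2 using 4 with k
    rw [ENNReal.ofReal_toReal (ENNReal.mul_ne_top (by simp) (measure_ne_top _ _))]
  · exact ENNReal.summable_toReal

lemma mape_aux_lower (m t : ℝ) (hm : m ≠ 0) :
    (⌊1 / t⌋₊ : ℝ≥0∞) ≤ ENNReal.ofReal (1 / |m|) * (mapeRatio m t + 1) := by
  by_cases ht : t = 0
  · simp [ht]
  have hm' : 0 < |m| := abs_pos.mpr hm
  have ht' : 0 < |t| := abs_pos.mpr ht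
  rw [mapeRatio, if_neg ht, ← ENNReal.ofReal_one, ← ENNReal.ofReal_add (by positivity) zero_le_one,
    ← ENNReal.ofReal_mul (by positivity), ← ENNReal.ofReal_natCast]
  apply ENNReal.ofReal_le_ofReal
  have h1 : (⌊1 / t⌋₊ : ℝ) ≤ 1 / |t| := by
    rcases lt_or_gt_of_ne ht with h | h
    · rw [Nat.floor_of_nonpos (one_div_neg.mpr h).le]
      simp
    · rw [abs_of_pos h]
      exact Nat.floor_le (by positivity)
  refine h1.trans ?_
  have h2 : |m| ≤ |m - t| + |t| := by simpa using abs_add_le (m - t) t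
  have h3 : 1 / |m| * (|m - t| / |t| + 1) = (|m - t| + |t|) / (|m| * |t|) := by field_simp
  rw [h3, div_le_div_iff₀ ht' (by positivity)]
  nlinarith

lemma mape_aux_upper (m t : ℝ) (ht : t ≠ 0) :
    mapeRatio m t ≤ 1 + ENNReal.ofReal |m| *
      (1 + ((⌊1 / t⌋₊ : ℝ≥0∞) + (⌊1 / (-t)⌋₊ : ℝ≥0∞))) := by
  have ht' : 0 < |t| := abs_pos.mpr ht
  have e : 1 + ENNReal.ofReal |m| * (1 + ((⌊1 / t⌋₊ : ℝ≥0∞) + (⌊1 / (-t)⌋₊ : ℝ≥0∞)))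
      = ENNReal.ofReal (1 + |m| * (1 + ((⌊1 / t⌋₊ : ℝ) + (⌊1 / (-t)⌋₊ : ℝ)))) := by
    rw [ENNReal.ofReal_add (by positivity) (by positivity), ENNReal.ofReal_mul (by positivity),
      ENNReal.ofReal_add (by positivity) (by positivity),
      ENNReal.ofReal_add (by positivity) (by positivity)]
    simp
  rw [e, mapeRatio, if_neg ht]
  apply ENNReal.ofReal_le_ofReal
  have h1 : 1 / |t| ≤ 1 + ((⌊1 / t⌋₊ : ℝ) + (⌊1 / (-t)⌋₊ : ℝ)) := by
    have a1 := Nat.lt_floor_add_one (1 / t)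
    have a2 := Nat.lt_floor_add_one (1 / (-t))
    have b1 : (0 : ℝ) ≤ ⌊1 / t⌋₊ := by positivity
    have b2 : (0 : ℝ) ≤ ⌊1 / (-t)⌋₊ := by positivity
    rcases abs_choice t with h | h <;> rw [h] <;> linarith
  have h2 : |m - t| ≤ |m| + |t| := abs_sub m t
  calc |m - t| / |t| ≤ (|m| + |t|) / |t| := by gcongr
    _ = 1 + |m| * (1 / |t|) := by field_simp; ring
    _ ≤ _ := by gcongr

theorem mape_J_finite_iff {Ω : Type*} [MeasurableSpace Ω] (μ : Measure Ω)
    [IsProbabilityMeasure μ] (T : Ω → ℝ) (hT : Measurable T) (J : ℝ → ℝ≥0∞)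
    (hJ : ∀ m : ℝ, J m = ∫⁻ ω, mapeRatio m (T ω) ∂μ) :
    ((∀ m : ℝ, J m < ⊤) ↔
      (μ {ω | T ω = 0} = 0 ∧
       Summable (fun k : ℕ =>
         (k : ℝ) * (μ {ω | T ω ∈ Set.Ioc (1 / ((k : ℝ) + 1)) (1 / (k : ℝ))}).toReal) ∧
       Summable (fun k : ℕ =>
         (k : ℝ) * (μ {ω | T ω ∈ Set.Ico (-(1 / (k : ℝ))) (-(1 / ((k : ℝ) + 1)))}).toReal)))
    ∧
    (¬ (μ {ω | T ω = 0} = 0 ∧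
       Summable (fun k : ℕ =>
         (k : ℝ) * (μ {ω | T ω ∈ Set.Ioc (1 / ((k : ℝ) + 1)) (1 / (k : ℝ))}).toReal) ∧
       Summable (fun k : ℕ =>
         (k : ℝ) * (μ {ω | T ω ∈ Set.Ico (-(1 / (k : ℝ))) (-(1 / ((k : ℝ) + 1)))}).toReal)) →
      ∀ m : ℝ, m ≠ 0 → J m = ⊤) := by
  have hB : ∀ k : ℕ, {ω | T ω ∈ Set.Ico (-(1 / (k : ℝ))) (-(1 / ((k : ℝ) + 1)))} =
      {ω | (-T) ω ∈ Set.Ioc (1 / ((k : ℝ) + 1)) (1 / (k : ℝ))} := by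
    intro k
    ext ω
    simp only [Set.mem_setOf_eq, Set.mem_Ico, Set.mem_Ioc, Pi.neg_apply]
    constructor <;> rintro ⟨h1, h2⟩ <;> constructor <;> linarith
  simp_rw [hB]
  rw [mape_aux_sum μ T hT, mape_aux_sum μ (-T) hT.neg]
  simp only [Pi.neg_apply]
  have hfl : Measurable (fun ω => (⌊1 / T ω⌋₊ : ℝ≥0∞)) :=
    (measurable_from_top (f := fun n : ℕ => (n : ℝ≥0∞))).comp
      (Nat.measurable_floor.comp (hT.const_div 1))
  have hmeas : ∀ m, Measurable (fun ω => mapeRatio m (T ω)) := by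
    intro m
    unfold mapeRatio
    refine Measurable.ite (hT (measurableSet_singleton 0)) measurable_const ?_
    fun_prop
  have hlow : ∀ m : ℝ, m ≠ 0 → J m ≠ ⊤ → (μ {ω | T ω = 0} = 0 ∧
      ∫⁻ ω, (⌊1 / T ω⌋₊ : ℝ≥0∞) ∂μ ≠ ⊤ ∧ ∫⁻ ω, (⌊1 / (-T ω)⌋₊ : ℝ≥0∞) ∂μ ≠ ⊤) := by
    intro m hm hfin
    rw [hJ] at hfin
    have hb : ∫⁻ ω, ENNReal.ofReal (1 / |m|) * (mapeRatio m (T ω) + 1) ∂μ ≠ ⊤ := by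
      rw [lintegral_const_mul _ ((hmeas m).add_const 1), lintegral_add_left (hmeas m)]
      exact ENNReal.mul_ne_top ENNReal.ofReal_ne_top (ENNReal.add_ne_top.mpr ⟨hfin, by simp⟩)
    refine ⟨?_, ne_top_of_le_ne_top hb (lintegral_mono fun ω => mape_aux_lower m (T ω) hm),
      ne_top_of_le_ne_top hb (lintegral_mono fun ω => ?_)⟩
    · have h := ae_lt_top (hmeas m) hfin
      have h' : ∀ᵐ ω ∂μ, ¬ (T ω = 0) := by
        filter_upwards [h] with ω hω h0
        simp [mapeRatio, h0, hm] at hω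
      simpa [ae_iff] using h'
    · have h := mape_aux_lower (-m) (-T ω) (neg_ne_zero.mpr hm)
      have e : mapeRatio (-m) (-T ω) = mapeRatio m (T ω) := by
        have : |-m - -T ω| = |m - T ω| := by rw [← abs_neg]; congr 1; ring
        simp only [mapeRatio, neg_eq_zero, abs_neg, this]
      rwa [e, abs_neg] at h
  refine ⟨⟨fun h => hlow 1 one_ne_zero (h 1).ne, ?_⟩, ?_⟩
  · rintro ⟨h0, h1, h2⟩ m
    rw [hJ]
    have h' : ∀ᵐ ω ∂μ, ¬ (T ω = 0) := by simpa [ae_iff] using h0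
    have hle : ∫⁻ ω, mapeRatio m (T ω) ∂μ ≤ ∫⁻ ω, (1 + ENNReal.ofReal |m| *
        (1 + ((⌊1 / T ω⌋₊ : ℝ≥0∞) + (⌊1 / (-T ω)⌋₊ : ℝ≥0∞)))) ∂μ := by
      apply lintegral_mono_ae
      filter_upwards [h'] with ω hω
      exact mape_aux_upper m (T ω) hω
    refine lt_of_le_of_lt hle ?_
    rw [lintegral_add_left measurable_const, lintegral_const_mul' _ _ ENNReal.ofReal_ne_top,
      lintegral_add_left measurable_const, lintegral_add_left hfl]
    refine lt_top_iff_ne_top.mpr (ENNReal.add_ne_top.mpr ⟨by simp, ENNReal.mul_ne_top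
      ENNReal.ofReal_ne_top (ENNReal.add_ne_top.mpr ⟨by simp, ENNReal.add_ne_top.mpr ⟨h1, h2⟩⟩)⟩)
  · intro h m hm
    by_contra hne
    exact h (hlow m hm hne)
end

section
/- Let T be a real-valued random variable such that P(T = 0) = 0 and such that J(m) = E(|m - T| / |T|) is finite for all real m. Then J is a convex function on ℝ, J(m) → +∞ as m → +∞ and as m → -∞ (J is coercive), and J attains a global minimum at some point of ℝ. -/
open MeasureTheory ENNReal Filter Set

theorem mape_J_convex_coercive_has_min {Ω : Type*} [MeasurableSpace Ω] (μ : Measure Ω)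
    [IsProbabilityMeasure μ] (T : Ω → ℝ) (hT : Measurable T)
    (h0 : μ {ω | T ω = 0} = 0)
    (J : ℝ → ℝ≥0∞) (hJ : ∀ m : ℝ, J m = ∫⁻ ω, mapeRatio m (T ω) ∂μ)
    (hfin : ∀ m : ℝ, J m < ⊤) :
    ConvexOn ℝ Set.univ (fun m : ℝ => (J m).toReal) ∧
    Tendsto (fun m : ℝ => (J m).toReal) atTop atTop ∧
    Tendsto (fun m : ℝ => (J m).toReal) atBot atTop ∧
    ∃ m₀ : ℝ, ∀ m : ℝ, (J m₀).toReal ≤ (J m).toReal := by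
  have hne : ∀ᵐ ω ∂μ, T ω ≠ 0 := by
    rw [ae_iff]; simpa using h0
  have hmeas : ∀ m : ℝ, Measurable (fun ω => |m - T ω| / |T ω|) := fun m => by fun_prop
  have hJ2 : ∀ m : ℝ, J m = ∫⁻ ω, ENNReal.ofReal (|m - T ω| / |T ω|) ∂μ := by
    intro m
    rw [hJ m]
    apply lintegral_congr_ae
    filter_upwards [hne] with ω hω
    simp [mapeRatio, hω]
  have hnn : ∀ (m : ℝ) (ω : Ω), 0 ≤ |m - T ω| / |T ω| := fun m ω => by positivity
  have hint : ∀ m : ℝ, Integrable (fun ω => |m - T ω| / |T ω|) μ := by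
    intro m
    refine ⟨(hmeas m).aestronglyMeasurable, ?_⟩
    rw [hasFiniteIntegral_iff_ofReal (Eventually.of_forall (hnn m)), ← hJ2 m]
    exact hfin m
  have hJ3 : ∀ m : ℝ, (J m).toReal = ∫ ω, |m - T ω| / |T ω| ∂μ := by
    intro m
    rw [hJ2 m, integral_eq_lintegral_of_nonneg_ae (Eventually.of_forall (hnn m))
      (hmeas m).aestronglyMeasurable]
  have hinv : Integrable (fun ω => |T ω|⁻¹) μ := by
    refine Integrable.mono' ((hint 1).add (integrable_const (1 : ℝ)))
      (by fun_prop : Measurable (fun ω => |T ω|⁻¹)).aestronglyMeasurable ?_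
    filter_upwards [hne] with ω hω
    have hp : 0 < |T ω| := abs_pos.mpr hω
    have h1 : (1 : ℝ) ≤ |1 - T ω| + |T ω| := by
      have := abs_add_le (1 - T ω) (T ω)
      simpa using this
    simp only [Real.norm_eq_abs, abs_inv, abs_abs, Pi.add_apply]
    rw [inv_eq_one_div, div_add_one hp.ne']
    gcongr
  have hc : 0 < ∫ ω, |T ω|⁻¹ ∂μ := by
    rw [integral_pos_iff_support_of_nonneg (fun ω => by positivity) hinv]
    have : μ (Function.support fun ω => |T ω|⁻¹) = 1 := by
      rw [prob_compl_eq_zero_iff₀ ?_ |>.symm]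
      · convert h0 using 2
        ext ω; simp
      · exact (measurableSet_support (by fun_prop)).nullMeasurableSet
    rw [this]; exact one_pos
  have hlow : ∀ m : ℝ, |m| * (∫ ω, |T ω|⁻¹ ∂μ) + (-1) ≤ (J m).toReal := by
    intro m
    rw [hJ3 m]
    have h1 : |m| * (∫ ω, |T ω|⁻¹ ∂μ) + (-1) = ∫ ω, (|m| * |T ω|⁻¹ + (-1)) ∂μ := by
      rw [integral_add (hinv.const_mul _) (integrable_const _), integral_const_mul]
      simp
    rw [h1]
    refine integral_mono_ae ((hinv.const_mul _).add (integrable_const _)) (hint m) ?_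
    filter_upwards [hne] with ω hω
    have hp : 0 < |T ω| := abs_pos.mpr hω
    have h2 := abs_sub_abs_le_abs_sub m (T ω)
    have h3 : |m| * |T ω|⁻¹ + (-1) = (|m| - |T ω|) / |T ω| := by
      field_simp
      ring
    rw [h3]
    gcongr
  have hconv : ConvexOn ℝ Set.univ (fun m : ℝ => (J m).toReal) := by
    refine ⟨convex_univ, ?_⟩
    intro x _ y _ a b ha hb hab
    simp only [hJ3, smul_eq_mul]
    rw [← integral_const_mul, ← integral_const_mul,
      ← integral_add ((hint x).const_mul a) ((hint y).const_mul b)]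
    refine integral_mono (hint _) (((hint x).const_mul a).add ((hint y).const_mul b)) ?_
    intro ω
    have h1 : |a * x + b * y - T ω| ≤ a * |x - T ω| + b * |y - T ω| := by
      have h2 : a * x + b * y - T ω = a * (x - T ω) + b * (y - T ω) := by
        linear_combination (T ω) * hab
      rw [h2]
      refine (abs_add_le _ _).trans ?_
      rw [abs_mul, abs_mul, abs_of_nonneg ha, abs_of_nonneg hb]
    calc |a * x + b * y - T ω| / |T ω|
        ≤ (a * |x - T ω| + b * |y - T ω|) / |T ω| := by gcongr
      _ = a * (|x - T ω| / |T ω|) + b * (|y - T ω| / |T ω|) := by ring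
  have htop : Tendsto (fun m : ℝ => (J m).toReal) atTop atTop :=
    tendsto_atTop_mono hlow
      (tendsto_atTop_add_const_right _ _ (tendsto_abs_atTop_atTop.atTop_mul_const hc))
  have hbot : Tendsto (fun m : ℝ => (J m).toReal) atBot atTop :=
    tendsto_atTop_mono hlow
      (tendsto_atTop_add_const_right _ _ (tendsto_abs_atBot_atTop.atTop_mul_const hc))
  refine ⟨hconv, htop, hbot, ?_⟩
  have hcont : Continuous (fun m : ℝ => (J m).toReal) :=
    continuousOn_univ.mp (hconv.continuousOn isOpen_univ)
  apply hcont.exists_forall_le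
  rw [cocompact_eq_atBot_atTop]
  exact hbot.sup htop
end

section
/- Let T be the random variable taking values in {1, 2, 3} with P(T = 1) = 0.3, P(T = 2) = 0.4 and P(T = 3) = 0.3, and let J(m) = E(|m - T| / |T|) = 0.3·|m - 1| + 0.4·|m - 2|/2 + 0.3·|m - 3|/3. Then J(m) = 0.4 for every m ∈ [1, 2]; in particular J has infinitely many global minimizers. -/
open Set

theorem mape_discrete_counterexample (J : ℝ → ℝ)
    (hJ : ∀ m : ℝ, J m = 0.3 * |m - 1| + 0.4 * |m - 2| / 2 + 0.3 * |m - 3| / 3) :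
    (∀ m ∈ Set.Icc (1:ℝ) 2, J m = 0.4) ∧
    {m : ℝ | ∀ m' : ℝ, J m ≤ J m'}.Infinite := by
  have h : ∀ m ∈ Set.Icc (1:ℝ) 2, J m = 0.4 := by
    intro m hm
    obtain ⟨h1, h2⟩ := hm
    rw [hJ, abs_of_nonneg (by linarith : 0 ≤ m - 1), abs_of_nonpos (by linarith : m - 2 ≤ 0),
      abs_of_nonpos (by linarith : m - 3 ≤ 0)]
    ring
  refine ⟨h, (Set.Icc_infinite (by norm_num : (1:ℝ) < 2)).mono ?_⟩
  intro m hm m'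
  rw [h m hm, hJ m']
  have h1 := le_abs_self (m' - 1)
  have h2 := neg_le_abs (m' - 2)
  have h3 := neg_le_abs (m' - 3)
  norm_num
  linarith
end

section
/- Let G be a class of functions from ℝ^d to ℝ with ‖G‖_∞ = sup_{g∈G} sup_x |g(x)| < ∞, and let Y_L > 0. For g ∈ G let h_g(x,y) = |g(x)-y|/|y| (the MAPE-loss function) and h'_g(x,y) = |g(x)-y| (the MAE-loss function), and let ‖·‖_∞^{Y_L} denote the supremum norm over ℝ^d × ((-∞,-Y_L] ∪ [Y_L,∞)) and ‖·‖_∞ the supremum norm over ℝ^d × ℝ. Then for every ε > 0, the ε-covering number of H(G, l_MAPE) = {h_g : g ∈ G} with respect to ‖·‖_∞^{Y_L} is at most the (ε·Y_L)-covering number of H(G, l_MAE) = {h'_g : g ∈ G} with respect to ‖·‖_∞. -/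
open ENNReal Set

/-- The `ε`-covering number of a class `F` with respect to an `ℝ≥0∞`-valued
dissimilarity `κ`: the size of the smallest finite subset `S ⊆ F` such that every
element of `F` is at dissimilarity `< ε` of some element of `S` (`⊤` if no such
finite cover exists). -/
noncomputable def coveringNumber {α : Type*} (ε : ℝ≥0∞) (F : Set α) (κ : α → α → ℝ≥0∞) : ℕ∞ :=
  sInf {n : ℕ∞ | ∃ S : Finset α, (S.card : ℕ∞) = n ∧ ↑S ⊆ F ∧
    ∀ f ∈ F, ∃ f' ∈ S, κ f f' < ε}

theorem covering_number_MAPE_le_MAE {d : ℕ} (G : Set ((Fin d → ℝ) → ℝ))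
    (hG : ∃ B : ℝ, ∀ g ∈ G, ∀ x, |g x| ≤ B) (YL : ℝ) (hYL : 0 < YL) (ε : ℝ) (hε : 0 < ε) :
    coveringNumber (ENNReal.ofReal ε)
      ((fun g : (Fin d → ℝ) → ℝ => fun p : (Fin d → ℝ) × ℝ => |g p.1 - p.2| / |p.2|) '' G)
      (fun h₁ h₂ => ⨆ q : (Fin d → ℝ) × {y : ℝ // YL ≤ |y|},
        ENNReal.ofReal |h₁ (q.1, (q.2 : ℝ)) - h₂ (q.1, (q.2 : ℝ))|)
    ≤ coveringNumber (ENNReal.ofReal (ε * YL))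
      ((fun g : (Fin d → ℝ) → ℝ => fun p : (Fin d → ℝ) × ℝ => |g p.1 - p.2|) '' G)
      (fun h₁ h₂ => ⨆ p : (Fin d → ℝ) × ℝ, ENNReal.ofReal |h₁ p - h₂ p|) := by
  classical
  unfold coveringNumber
  refine le_sInf ?_
  rintro n ⟨S, rfl, hS, hcov⟩
  let D : ((Fin d → ℝ) × ℝ → ℝ) → ((Fin d → ℝ) × ℝ → ℝ) := fun h p => h p / |p.2|
  have hcard : ((S.image D).card : ℕ∞) ≤ (S.card : ℕ∞) := by
    exact_mod_cast Finset.card_image_le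
  refine le_trans (sInf_le ⟨S.image D, rfl, ?_, ?_⟩) hcard
  · intro f hf
    obtain ⟨h, hh, rfl⟩ := Finset.mem_image.mp (Finset.mem_coe.mp hf)
    obtain ⟨g, hg, rfl⟩ := hS (Finset.mem_coe.mpr hh)
    exact ⟨g, hg, rfl⟩
  · rintro f ⟨g, hg, rfl⟩
    obtain ⟨h, hh, hlt⟩ := hcov _ ⟨g, hg, rfl⟩
    refine ⟨D h, Finset.mem_image_of_mem D hh, ?_⟩
    have hY0 : ENNReal.ofReal YL ≠ 0 := by simpa using hYL
    rw [ENNReal.ofReal_mul hε.le] at hlt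
    refine lt_of_le_of_lt ?_ (ENNReal.div_lt_of_lt_mul hlt)
    refine iSup_le ?_
    rintro ⟨x, y, hy⟩
    rw [ENNReal.le_div_iff_mul_le (Or.inl hY0) (Or.inl ENNReal.ofReal_ne_top),
      ← ENNReal.ofReal_mul (abs_nonneg _)]
    refine le_trans (ENNReal.ofReal_le_ofReal ?_)
      (le_iSup (fun p : (Fin d → ℝ) × ℝ => ENNReal.ofReal |(|g p.1 - p.2|) - h p|) (x, y))
    have hy0 : 0 < |y| := hYL.trans_le hy
    simp only [D]
    rw [← sub_div, abs_div, abs_abs, div_mul_eq_mul_div, div_le_iff₀ hy0]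
    exact mul_le_mul_of_nonneg_left hy (abs_nonneg _)
end

section
/- Let G be an arbitrary class of functions from ℝ^d to ℝ. Define H⁺(G, l) = { (x, y, t) ↦ 1_{t ≤ l(g(x), y)} : g ∈ G } as a class of {0,1}-valued functions on ℝ^d × ℝ × ℝ. Then the Vapnik–Chervonenkis dimension of H⁺(G, l_MAPE) is at most the Vapnik–Chervonenkis dimension of H⁺(G, l_MAE). -/
open ENNReal Set

/-- A class `F` of boolean-valued functions shatters a finite set `s` if every
binary labeling of `s` is realized by some member of `F`. -/
def ShattersClass {Z : Type*} (F : Set (Z → Bool)) (s : Finset Z) : Prop :=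
  ∀ θ : Z → Bool, ∃ f ∈ F, ∀ z ∈ s, f z = θ z

/-- The Vapnik–Chervonenkis dimension of a class of boolean-valued functions:
the supremum of the cardinalities of the finite sets it shatters. -/
noncomputable def vcDim {Z : Type*} (F : Set (Z → Bool)) : ℕ∞ :=
  sSup {n : ℕ∞ | ∃ s : Finset Z, (s.card : ℕ∞) = n ∧ ShattersClass F s}

/-- The MAPE loss `|p - y| / |y|` with the conventions `a/0 = ∞` for `a ≠ 0`
and `0/0 = 1`, valued in `[0, ∞]`. -/
noncomputable def lMAPE (p y : ℝ) : ℝ≥0∞ :=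
  if y = 0 then (if p = 0 then 1 else ⊤) else ENNReal.ofReal (|p - y| / |y|)

theorem exists_small_threshold (A : Finset ℝ) :
    ∃ τ : ℝ, 0 < τ ∧ ∀ a ∈ A, a ≠ 0 → τ ≤ |a| := by
  induction A using Finset.induction_on with
  | empty => exact ⟨1, one_pos, by simp⟩
  | insert a A _ ih =>
    obtain ⟨τ, h0, h⟩ := ih
    by_cases ha : a = 0
    · refine ⟨τ, h0, fun b hb hb0 => ?_⟩
      rcases Finset.mem_insert.1 hb with rfl | hb
      · exact absurd ha hb0
      · exact h b hb hb0
    · refine ⟨min τ |a|, lt_min h0 (abs_pos.2 ha), fun b hb hb0 => ?_⟩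
      rcases Finset.mem_insert.1 hb with rfl | hb
      · exact min_le_right _ _
      · exact (min_le_left _ _).trans (h b hb hb0)

theorem shatters_transfer {Z : Type*} (F : Set (Z → Bool)) (s : Finset Z) (φ : Z → Z)
    (h : ∀ θ : Z → Bool, ∃ f ∈ F, ∀ z ∈ s, f (φ z) = θ z) :
    ∃ s' : Finset Z, s'.card = s.card ∧ ShattersClass F s' := by
  classical
  refine ⟨s.image φ, Finset.card_image_of_injOn ?_, ?_⟩
  · intro a ha b hb hab
    obtain ⟨f, _, hf⟩ := h (fun z => decide (z = a))
    have h1 := hf a ha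
    have h2 := hf b hb
    rw [hab, h2] at h1
    have h3 : b = a := by simpa using h1
    exact h3.symm
  · intro θ
    obtain ⟨f, hF, hf⟩ := h (fun z => θ (φ z))
    refine ⟨f, hF, fun z hz => ?_⟩
    obtain ⟨w, hw, rfl⟩ := Finset.mem_image.1 hz
    exact hf w hw

theorem lMAPE_iff_of_ne {p y t : ℝ} (hy : y ≠ 0) (_ht : 0 < t) :
    ENNReal.ofReal t ≤ lMAPE p y ↔ t * |y| ≤ |p - y| := by
  rw [lMAPE, if_neg hy, ENNReal.ofReal_le_ofReal_iff (by positivity),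
    le_div_iff₀ (abs_pos.2 hy)]

theorem vcDim_MAPE_le_vcDim_MAE {d : ℕ} (G : Set ((Fin d → ℝ) → ℝ)) :
    vcDim ((fun g : (Fin d → ℝ) → ℝ =>
        fun v : (Fin d → ℝ) × ℝ × ℝ =>
          decide (ENNReal.ofReal v.2.2 ≤ lMAPE (g v.1) v.2.1)) '' G)
    ≤ vcDim ((fun g : (Fin d → ℝ) → ℝ =>
        fun v : (Fin d → ℝ) × ℝ × ℝ =>
          decide (v.2.2 ≤ |g v.1 - v.2.1|)) '' G) := by
  classical
  apply sSup_le
  rintro n ⟨s, rfl, hs⟩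
  suffices H : ∃ s' : Finset ((Fin d → ℝ) × ℝ × ℝ), s'.card = s.card ∧
      ShattersClass ((fun g : (Fin d → ℝ) → ℝ =>
        fun v : (Fin d → ℝ) × ℝ × ℝ =>
          decide (v.2.2 ≤ |g v.1 - v.2.1|)) '' G) s' by
    obtain ⟨s', hc, hs'⟩ := H
    exact le_sSup ⟨s', by rw [hc], hs'⟩
  have key : ∀ T : Finset ((Fin d → ℝ) × ℝ × ℝ), ∃ g ∈ G, ∀ z ∈ s,
      (ENNReal.ofReal z.2.2 ≤ lMAPE (g z.1) z.2.1 ↔ z ∈ T) := by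
    intro T
    obtain ⟨_, ⟨g, hg, rfl⟩, h⟩ := hs (fun z => decide (z ∈ T))
    exact ⟨g, hg, fun z hz => by simpa using h z hz⟩
  choose g hgG hg using key
  have hτ : ∀ z : (Fin d → ℝ) × ℝ × ℝ, ∃ τ : ℝ, 0 < τ ∧
      ∀ T ∈ s.powerset, g T z.1 ≠ 0 → τ ≤ |g T z.1| := by
    intro z
    obtain ⟨τ, h0, h⟩ := exists_small_threshold (s.powerset.image (fun T => g T z.1))
    exact ⟨τ, h0, fun T hT => h _ (Finset.mem_image_of_mem _ hT)⟩
  choose τ hτ0 hτ using hτ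
  refine shatters_transfer _ s
    (fun z => if z.2.1 = 0 then (z.1, 0, τ z) else (z.1, z.2.1, z.2.2 * |z.2.1|)) ?_
  intro θ
  have hT : s.filter (fun z => θ z = true) ∈ s.powerset :=
    Finset.mem_powerset.2 (Finset.filter_subset _ _)
  set T := s.filter (fun z => θ z = true) with hTdef
  refine ⟨_, ⟨g T, hgG T, rfl⟩, fun z hz => ?_⟩
  have hempty := hg ∅ z hz
  simp only [Finset.notMem_empty, iff_false, not_le] at hempty
  have hpos : 0 < z.2.2 := ENNReal.ofReal_pos.1 (lt_of_le_of_lt bot_le hempty)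
  have hmem := hg T z hz
  have hθ : z ∈ T ↔ θ z = true := by simp [hTdef, hz]
  rw [hθ] at hmem
  rw [Bool.eq_iff_iff, ← hmem, decide_eq_true_iff]
  by_cases hy : z.2.1 = 0
  · rw [if_pos hy]
    simp only [hy, sub_zero]
    have h1 : 1 < ENNReal.ofReal z.2.2 := by
      rw [lMAPE, if_pos hy] at hempty
      split_ifs at hempty with hp
      · exact hempty
      · exact absurd hempty not_top_lt
    rw [lMAPE, if_pos rfl]
    split_ifs with hp
    · rw [hp, abs_zero]
      exact iff_of_false (not_le.2 (hτ0 z)) (not_le.2 h1)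
    · simp [hτ z T hT hp]
  · rw [if_neg hy, lMAPE_iff_of_ne hy hpos]
end
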